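/- arXiv:1903.05011 — 2 statements merged into one kernel-verified Lean document; each statement's English description precedes it below -/
import Mathlib

section
/- Fix m = (m₁,…,m_k) ∈ ℂ^k and set p_j := m₁x₁ʲ + ⋯ + m_k x_kʲ ∈ ℂ[x₁,…,x_k] for j ≥ 1. If for some i ≥ 1 the element p_{i+1} lies in the ℂ-subalgebra of ℂ[x₁,…,x_k] generated by p₁,…,pᵢ, then p_j lies in that same subalgebra for every j ≥ i+1. -/
open MvPolynomial

/-!
The derivation `D = ∑ₜ xₜ² ∂ₜ` sends `p_j` to `j p_{j+1}`. If `p_{i+1}` lies in the algebra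
generated by `p₁, …, pᵢ`, then `D` maps each generator, hence the whole algebra, into that algebra.
Applying `D` repeatedly to `p_{i+1}`, and dividing by the nonzero integer `j` each time, yields
all the later power sums.
-/

theorem derivation_mem_adjoin {R A : Type*} [CommSemiring R] [CommSemiring A] [Algebra R A]
    (D : Derivation R A A) {s : Set A} (hs : ∀ x ∈ s, D x ∈ Algebra.adjoin R s) {x : A}
    (hx : x ∈ Algebra.adjoin R s) : D x ∈ Algebra.adjoin R s := by
  induction hx using Algebra.adjoin_induction with
  | mem x hx => exact hs x hx
  | algebraMap r => simp
  | add x y _ _ hDx hDy => simpa using add_mem hDx hDy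
  | mul x y hx hy hDx hDy => simpa using add_mem (mul_mem hx hDy) (mul_mem hy hDx)

theorem mem_adjoin_image_Icc_of_derivation_eq_smul_succ {R A : Type*} [CommSemiring R]
    [CommSemiring A] [Algebra R A] (D : Derivation R A A) {p : ℕ → A} {c : ℕ → R} {i : ℕ}
    (hD : ∀ j, 1 ≤ j → D (p j) = c j • p (j + 1)) (hc : ∀ j, i + 1 ≤ j → IsUnit (c j))
    (hp : p (i + 1) ∈ Algebra.adjoin R (p '' Set.Icc 1 i)) (j : ℕ) (hj : i + 1 ≤ j) :
    p j ∈ Algebra.adjoin R (p '' Set.Icc 1 i) := by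
  have generators_stable : ∀ x ∈ p '' Set.Icc 1 i, D x ∈ Algebra.adjoin R (p '' Set.Icc 1 i) := by
    rintro _ ⟨l, ⟨one_le_l, l_le_i⟩, rfl⟩
    rw [hD l one_le_l]
    refine Subalgebra.smul_mem _ ?_ _
    obtain rfl | l_lt_i := l_le_i.eq_or_lt
    · exact hp
    · exact Algebra.subset_adjoin ⟨l + 1, ⟨by lia, l_lt_i⟩, rfl⟩
  induction j, hj using Nat.le_induction with
  | base => exact hp
  | succ j hj ih =>
    have smul_succ_mem : c j • p (j + 1) ∈ Algebra.adjoin R (p '' Set.Icc 1 i) :=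
      hD j (by lia) ▸ derivation_mem_adjoin D generators_stable ih
    exact (Submodule.smul_mem_iff_of_isUnit
      (Algebra.adjoin R (p '' Set.Icc 1 i)).toSubmodule (hc j hj)).mp smul_succ_mem

section WeightedPowerSums

variable {σ R : Type*} [CommSemiring R]

/-- The weighted power sum `p_j(m; x) = ∑ₜ mₜ xₜʲ`. -/
noncomputable def weightedPsum [Fintype σ] (m : σ → R) (j : ℕ) : MvPolynomial σ R :=
  ∑ t, C (m t) * X t ^ j

variable (σ R) in
/-- The derivation `∑ₜ xₜ² ∂ₜ`, used to pass from `p_j` to `j p_{j+1}`. -/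
noncomputable def sqDerivation : Derivation R (MvPolynomial σ R) (MvPolynomial σ R) :=
  mkDerivation R fun t => X t ^ 2

theorem sqDerivation_X_pow (t : σ) {j : ℕ} (hj : 1 ≤ j) :
    sqDerivation σ R (X t ^ j) = (j : R) • X t ^ (j + 1) := by
  calc
    sqDerivation σ R (X t ^ j) = j • (X t ^ (j - 1) * X t ^ 2) := by
      rw [Derivation.leibniz_pow, sqDerivation, mkDerivation_X, smul_eq_mul]
    _ = (j : R) • X t ^ (j + 1) := by
      rw [← pow_add, show j - 1 + 2 = j + 1 by lia, Nat.cast_smul_eq_nsmul]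

theorem sqDerivation_weightedPsum [Fintype σ] (m : σ → R) {j : ℕ} (hj : 1 ≤ j) :
    sqDerivation σ R (weightedPsum m j) = (j : R) • weightedPsum m (j + 1) := by
  simp only [weightedPsum, ← smul_eq_C_mul, map_sum, Derivation.map_smul,
    sqDerivation_X_pow _ hj, Finset.smul_sum, smul_comm (j : R)]

theorem stmt_5_general [Fintype σ] [Algebra ℚ≥0 R] (m : σ → R) (i : ℕ)
    (h : weightedPsum m (i + 1) ∈ Algebra.adjoin R (weightedPsum m '' Set.Icc 1 i)) :
    ∀ j : ℕ, i + 1 ≤ j → weightedPsum m j ∈ Algebra.adjoin R (weightedPsum m '' Set.Icc 1 i) := by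
  have isUnit_natCast (j : ℕ) (hj : i + 1 ≤ j) : IsUnit (j : R) := by
    have j_ne_zero : (j : ℚ≥0) ≠ 0 := by exact_mod_cast (by lia : j ≠ 0)
    simpa using j_ne_zero.isUnit.map (algebraMap ℚ≥0 R)
  exact mem_adjoin_image_Icc_of_derivation_eq_smul_succ (sqDerivation σ R)
    (fun _ => sqDerivation_weightedPsum m) isUnit_natCast h

end WeightedPowerSums

/-- Fix `m ∈ ℂ^k` and set `p_j := m₁x₁ʲ + ⋯ + m_k x_kʲ`.  If for some
`i ≥ 1` the element `p_{i+1}` lies in the `ℂ`-subalgebra generated by `p₁,…,pᵢ`, then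
`p_j` lies in that same subalgebra for every `j ≥ i+1`. -/
theorem stmt_5 (k : ℕ) (m : Fin k → ℂ) (i : ℕ) (hi : 1 ≤ i)
    (h : (∑ t : Fin k, C (m t) * X t ^ (i + 1)) ∈
      Algebra.adjoin ℂ
        ((fun j : ℕ => ∑ t : Fin k, (C (m t) : MvPolynomial (Fin k) ℂ) * X t ^ j) ''
          Set.Icc 1 i)) :
    ∀ j : ℕ, i + 1 ≤ j →
      (∑ t : Fin k, C (m t) * X t ^ j) ∈
        Algebra.adjoin ℂ
          ((fun j : ℕ => ∑ t : Fin k, (C (m t) : MvPolynomial (Fin k) ℂ) * X t ^ j) ''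
            Set.Icc 1 i) := by
  exact stmt_5_general m i h
end

section
/- Let m = (m₁,m₂,m₃) ∈ ℂ³ be such that m₁, m₂, m₃, m₁+m₂, m₁+m₃, m₂+m₃ and m₁+m₂+m₃ are all nonzero, and set p_j := m₁x₁ʲ + m₂x₂ʲ + m₃x₃ʲ ∈ ℂ[x₁,x₂,x₃]. Then for every j ≥ 1, p_j lies in the ℂ-subalgebra of ℂ[x₁,x₂,x₃] generated by p₁, p₂, p₃, p₄, p₅, p₆, p₇. -/
open MvPolynomial

/-!
Translating all variables by their centre of mass, which is a multiple of `p₁`, changes each `p_j`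
by a combination of lower power sums with coefficients in `ℂ[p₁]`, so to see that `p₈` is
a polynomial in `p₁, …, p₇` one may assume `p₁ = 0`. There the weight-`8` monomials in
`p₂, …, p₆` satisfy a linear relation with `p₈`, in which `p₈` has the coefficient
`(m₁ + m₂ + m₃)² m₁ m₂ m₃ (m₁ + m₂) (m₁ + m₃) (m₂ + m₃)`. The derivation `∑ xᵢ² ∂ᵢ` sends
`p_j` to `j p_{j+1}`; as `p₈` lies in the algebra generated by `p₁, …, p₇`, this derivation
preserves that algebra, and iterating it on `p₁` produces every `p_j`.
-/

section PowerSums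

variable {ι R S T : Type*} [Fintype ι] [CommRing R] [CommRing S] [Algebra R S]

/-- The weighted power sum `p_j(m; x) = ∑ᵢ mᵢ xᵢ ^ j` of a family `x` of elements of
an `R`-algebra; taking `x = MvPolynomial.X` gives the power sum as a polynomial. -/
def weightedPowerSum (m : ι → R) (x : ι → S) (j : ℕ) : S :=
  ∑ i, m i • x i ^ j

theorem weightedPowerSum_zero (m : ι → R) (x : ι → S) :
    weightedPowerSum m x 0 = algebraMap R S (∑ i, m i) := by
  simp only [weightedPowerSum, pow_zero, Algebra.algebraMap_eq_smul_one, Finset.sum_smul]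

theorem weightedPowerSum_mem_adjoin_of_le (m : ι → R) (x : ι → S) {n k : ℕ} (hk : k ≤ n) :
    weightedPowerSum m x k ∈ Algebra.adjoin R (weightedPowerSum m x '' Set.Icc 1 n) := by
  obtain rfl | hpos := k.eq_zero_or_pos
  · rw [weightedPowerSum_zero]
    exact Subalgebra.algebraMap_mem _ _
  · exact Algebra.subset_adjoin ⟨k, ⟨hpos, hk⟩, rfl⟩

theorem map_weightedPowerSum [CommRing T] [Algebra R T] (f : S →ₐ[R] T) (m : ι → R) (x : ι → S)
    (j : ℕ) : f (weightedPowerSum m x j) = weightedPowerSum m (f ∘ x) j := by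
  simp only [weightedPowerSum, map_sum, map_smul, map_pow, Function.comp_apply]

theorem weightedPowerSum_add_const (m : ι → R) (x : ι → S) (e : S) (j : ℕ) :
    weightedPowerSum m (fun i ↦ x i + e) j =
      ∑ k ∈ Finset.range (j + 1), weightedPowerSum m x k * (e ^ (j - k) * j.choose k) := by
  simp only [weightedPowerSum, add_pow, Finset.smul_sum, Finset.sum_mul]
  rw [Finset.sum_comm]
  simp only [smul_mul_assoc, mul_assoc]

theorem weightedPowerSum_add_const_mem {A : Subalgebra R S} {m : ι → R} {x : ι → S} {e : S}
    (he : e ∈ A) {j : ℕ} (hx : ∀ k ≤ j, weightedPowerSum m x k ∈ A) :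
    weightedPowerSum m (fun i ↦ x i + e) j ∈ A := by
  rw [weightedPowerSum_add_const]
  exact sum_mem fun k hk ↦ mul_mem (hx k (Finset.mem_range_succ_iff.1 hk))
    (mul_mem (pow_mem he _) (natCast_mem A _))

theorem exists_weightedPowerSum_sub_const_one_eq_zero {A : Subalgebra R S} {m : ι → R}
    {x : ι → S} (hm : IsUnit (∑ i, m i)) (hx : weightedPowerSum m x 1 ∈ A) :
    ∃ e ∈ A, weightedPowerSum m (fun i ↦ x i - e) 1 = 0 := by
  obtain ⟨r, hr⟩ := hm.exists_right_inv
  refine ⟨r • weightedPowerSum m x 1, A.smul_mem hx r, ?_⟩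
  have hsplit (e : S) :
      weightedPowerSum m (fun i ↦ x i - e) 1 = weightedPowerSum m x 1 - (∑ i, m i) • e := by
    simp only [weightedPowerSum, pow_one, smul_sub, Finset.sum_sub_distrib, Finset.sum_smul]
  rw [hsplit, smul_smul, hr, one_smul, sub_self]

end PowerSums

section Derivation

variable {ι R S : Type*} [CommRing R] [CommRing S] [Algebra R S]

theorem derivation_mem_adjoin_s14 (D : Derivation R S S) {s : Set S}
    (hs : ∀ f ∈ s, D f ∈ Algebra.adjoin R s) {f : S} (hf : f ∈ Algebra.adjoin R s) :
    D f ∈ Algebra.adjoin R s := by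
  induction hf using Algebra.adjoin_induction with
  | mem f hf => exact hs f hf
  | algebraMap r => simp only [D.map_algebraMap, zero_mem]
  | add f g _ _ hf hg => simpa only [map_add] using add_mem hf hg
  | mul f g hf hg hDf hDg =>
    simpa only [D.leibniz, smul_eq_mul] using add_mem (mul_mem hf hDg) (mul_mem hg hDf)

variable [Fintype ι]

theorem mkDerivation_X_sq_weightedPowerSum (m : ι → R) (j : ℕ) :
    mkDerivation R (fun i : ι ↦ (X i : MvPolynomial ι R) ^ 2) (weightedPowerSum m X j) =
      (j : R) • weightedPowerSum m X (j + 1) := by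
  simp only [weightedPowerSum, map_sum, Derivation.map_smul, Derivation.leibniz_pow,
    mkDerivation_X, Finset.smul_sum]
  refine Finset.sum_congr rfl fun i _ ↦ ?_
  cases j with
  | zero => simp
  | succ j =>
    rw [Nat.add_sub_cancel, smul_eq_mul, ← pow_add, ← Nat.cast_smul_eq_nsmul R, smul_comm]

theorem weightedPowerSum_X_mem_adjoin_of_succ_mem [Algebra ℚ R] (m : ι → R) {n : ℕ}
    (hn : weightedPowerSum m X (n + 1) ∈
      Algebra.adjoin R (weightedPowerSum m (X : ι → MvPolynomial ι R) '' Set.Icc 1 n)) (j : ℕ) :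
    weightedPowerSum m X j ∈
      Algebra.adjoin R (weightedPowerSum m (X : ι → MvPolynomial ι R) '' Set.Icc 1 n) := by
  set p : ℕ → MvPolynomial ι R := weightedPowerSum m X
  set A := Algebra.adjoin R (p '' Set.Icc 1 n)
  have hle (k : ℕ) (hk : k ≤ n + 1) : p k ∈ A := by
    obtain hk | rfl := Nat.le_succ_iff.1 hk
    · exact weightedPowerSum_mem_adjoin_of_le m X hk
    · exact hn
  have hD {f : MvPolynomial ι R} (hf : f ∈ A) : mkDerivation R (fun i ↦ X i ^ 2) f ∈ A := by
    refine derivation_mem_adjoin_s14 _ ?_ hf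
    rintro _ ⟨k, ⟨-, hk⟩, rfl⟩
    rw [mkDerivation_X_sq_weightedPowerSum]
    exact A.smul_mem (hle (k + 1) (by lia)) _
  cases j with
  | zero => exact hle 0 (by lia)
  | succ j =>
    induction j with
    | zero => exact hle 1 (by lia)
    | succ j ih =>
      have hunit : IsUnit ((j + 1 : ℕ) : R) := by
        simpa only [map_natCast] using
          (IsUnit.mk0 ((j + 1 : ℕ) : ℚ) (Nat.cast_ne_zero.2 j.succ_ne_zero)).map (algebraMap ℚ R)
      rw [← Subalgebra.mem_toSubmodule, ← Submodule.smul_mem_iff_of_isUnit _ hunit,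
        ← mkDerivation_X_sq_weightedPowerSum]
      exact hD ih

end Derivation

section ThreeVariables

variable {R S : Type*} [CommRing R] [CommRing S] [Algebra R S]

-- The coefficients come from solving the linear system for a relation among the monomials of
-- weight `8`; the parametrization of the plane `∑ mᵢ yᵢ = 0` is chosen to avoid denominators.
theorem smul_weightedPowerSum_eight_eq {a b c s t w : R} (hs : s = a + b + c)
    (ht : t = a * b + a * c + b * c) (hw : w = a * b * c) (u v : S) {q : ℕ → S}
    (hq : q = weightedPowerSum ![a, b, c] ![c • u, c • v, -(a • u + b • v)]) :
    (s ^ 2 * w * ((a + b) * (a + c) * (b + c))) • q 8 =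
      (s * w * (4 * s ^ 3 - 12 * s * t + 28 * w)) • (q 6 * q 2)
      + (8 * s * w * (s * t - 7 * w)) • (q 5 * q 3)
      + (s * (s ^ 2 * t ^ 2 - 3 * s ^ 3 * w - 3 * s * t * w + 35 * w ^ 2)) • q 4 ^ 2
      + (14 * s ^ 3 * w - 2 * s ^ 4 * t - 48 * s * t * w + 6 * s ^ 2 * t ^ 2) • (q 4 * q 2 ^ 2)
      + (s * w * (32 * t - 12 * s ^ 2)) • (q 3 ^ 2 * q 2)
      + (s * (s ^ 4 + s * w - 6 * s ^ 2 * t + 9 * t ^ 2)) • q 2 ^ 4 := by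
  subst hs ht hw hq
  simp only [weightedPowerSum, Fin.sum_univ_three, Matrix.cons_val, Algebra.smul_def, map_add,
    map_sub, map_mul, map_pow, map_ofNat]
  ring

variable {m₁ m₂ m₃ : R} {x : Fin 3 → S} {A : Subalgebra R S}

theorem exists_parametrization_of_weightedPowerSum_one_eq_zero (h₃ : IsUnit m₃)
    (hx : weightedPowerSum ![m₁, m₂, m₃] x 1 = 0) :
    ∃ u v : S, x = ![m₃ • u, m₃ • v, -(m₁ • u + m₂ • v)] := by
  obtain ⟨r, hr⟩ := h₃.exists_right_inv
  have hcancel (y : S) : m₃ • r • y = y := by rw [smul_smul, hr, one_smul]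
  have hlin : m₁ • x 0 + m₂ • x 1 + m₃ • x 2 = 0 := by
    simpa [weightedPowerSum, Fin.sum_univ_three] using hx
  have hx₂ : x 2 = -(m₁ • r • x 0 + m₂ • r • x 1) := by
    rw [smul_comm m₁, smul_comm m₂, ← smul_add, ← smul_neg, ← eq_neg_of_add_eq_zero_right hlin,
      smul_comm, hcancel]
  refine ⟨r • x 0, r • x 1, ?_⟩
  ext i
  fin_cases i
  · exact (hcancel _).symm
  · exact (hcancel _).symm
  · exact hx₂

theorem weightedPowerSum_eight_mem_of_one_eq_zero (h₁ : IsUnit m₁) (h₂ : IsUnit m₂) (h₃ : IsUnit m₃)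
    (h₁₂ : IsUnit (m₁ + m₂)) (h₁₃ : IsUnit (m₁ + m₃)) (h₂₃ : IsUnit (m₂ + m₃))
    (h₁₂₃ : IsUnit (m₁ + m₂ + m₃)) (hx : weightedPowerSum ![m₁, m₂, m₃] x 1 = 0)
    (hA : ∀ k ≤ 6, weightedPowerSum ![m₁, m₂, m₃] x k ∈ A) :
    weightedPowerSum ![m₁, m₂, m₃] x 8 ∈ A := by
  obtain ⟨u, v, rfl⟩ := exists_parametrization_of_weightedPowerSum_one_eq_zero h₃ hx
  have hunit := ((h₁₂₃.pow 2).mul ((h₁.mul h₂).mul h₃)).mul ((h₁₂.mul h₁₃).mul h₂₃)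
  have h2 := hA 2 (by lia)
  have h3 := hA 3 (by lia)
  have h4 := hA 4 (by lia)
  have h5 := hA 5 (by lia)
  have h6 := hA 6 (by lia)
  rw [← Subalgebra.mem_toSubmodule, ← Submodule.smul_mem_iff_of_isUnit _ hunit,
    Subalgebra.mem_toSubmodule, smul_weightedPowerSum_eight_eq rfl rfl rfl u v rfl]
  refine add_mem (add_mem (add_mem (add_mem (add_mem ?_ ?_) ?_) ?_) ?_) ?_ <;>
    refine A.smul_mem ?_ _
  · exact mul_mem h6 h2
  · exact mul_mem h5 h3
  · exact pow_mem h4 2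
  · exact mul_mem h4 (pow_mem h2 2)
  · exact mul_mem (pow_mem h3 2) h2
  · exact pow_mem h2 4

theorem weightedPowerSum_eight_mem (h₁ : IsUnit m₁) (h₂ : IsUnit m₂) (h₃ : IsUnit m₃)
    (h₁₂ : IsUnit (m₁ + m₂)) (h₁₃ : IsUnit (m₁ + m₃)) (h₂₃ : IsUnit (m₂ + m₃))
    (h₁₂₃ : IsUnit (m₁ + m₂ + m₃)) (hA : ∀ k ≤ 7, weightedPowerSum ![m₁, m₂, m₃] x k ∈ A) :
    weightedPowerSum ![m₁, m₂, m₃] x 8 ∈ A := by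
  have hsum : IsUnit (∑ i, ![m₁, m₂, m₃] i) := by
    simpa only [Fin.sum_univ_three, Matrix.cons_val] using h₁₂₃
  obtain ⟨e, he, hcentre⟩ :=
    exists_weightedPowerSum_sub_const_one_eq_zero hsum (hA 1 (by lia))
  have hlow (k : ℕ) (hk : k ≤ 7) : weightedPowerSum ![m₁, m₂, m₃] (fun i ↦ x i - e) k ∈ A := by
    simpa only [sub_eq_add_neg] using
      weightedPowerSum_add_const_mem (neg_mem he) fun l hl ↦ hA l (hl.trans hk)
  have h_eight : weightedPowerSum ![m₁, m₂, m₃] (fun i ↦ x i - e) 8 ∈ A :=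
    weightedPowerSum_eight_mem_of_one_eq_zero h₁ h₂ h₃ h₁₂ h₁₃ h₂₃ h₁₂₃ hcentre
      fun k hk ↦ hlow k (by lia)
  have hall (k : ℕ) (hk : k ≤ 8) : weightedPowerSum ![m₁, m₂, m₃] (fun i ↦ x i - e) k ∈ A := by
    obtain hk | rfl := Nat.le_succ_iff.1 hk
    · exact hlow k hk
    · exact h_eight
  simpa only [sub_add_cancel] using weightedPowerSum_add_const_mem he hall

theorem stmt_14_general [Algebra ℚ R] (h₁ : IsUnit m₁) (h₂ : IsUnit m₂) (h₃ : IsUnit m₃)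
    (h₁₂ : IsUnit (m₁ + m₂)) (h₁₃ : IsUnit (m₁ + m₃)) (h₂₃ : IsUnit (m₂ + m₃))
    (h₁₂₃ : IsUnit (m₁ + m₂ + m₃)) (x : Fin 3 → S) (j : ℕ) :
    weightedPowerSum ![m₁, m₂, m₃] x j ∈
      Algebra.adjoin R (weightedPowerSum ![m₁, m₂, m₃] x '' Set.Icc 1 7) := by
  set p : ℕ → MvPolynomial (Fin 3) R := weightedPowerSum ![m₁, m₂, m₃] X
  have h_eight : p 8 ∈ Algebra.adjoin R (p '' Set.Icc 1 7) :=
    weightedPowerSum_eight_mem h₁ h₂ h₃ h₁₂ h₁₃ h₂₃ h₁₂₃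
      fun _ ↦ weightedPowerSum_mem_adjoin_of_le _ X
  have hj : p j ∈ Algebra.adjoin R (p '' Set.Icc 1 7) :=
    weightedPowerSum_X_mem_adjoin_of_succ_mem _ h_eight j
  have heval (k : ℕ) : aeval x (p k) = weightedPowerSum ![m₁, m₂, m₃] x k := by
    rw [map_weightedPowerSum]
    congr 1
    exact funext (aeval_X x)
  simpa only [AlgHom.map_adjoin, Set.image_image, heval] using Subalgebra.mem_map.2 ⟨_, hj, heval j⟩

end ThreeVariables

/-- Let `m ∈ ℂ³` with `m₁, m₂, m₃, m₁+m₂, m₁+m₃, m₂+m₃, m₁+m₂+m₃` all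
nonzero, and `p_j := m₁x₁ʲ + m₂x₂ʲ + m₃x₃ʲ`.  Then for every `j ≥ 1`, `p_j` lies in the
`ℂ`-subalgebra of `ℂ[x₁,x₂,x₃]` generated by `p₁,…,p₇`. -/
theorem stmt_14 (m₁ m₂ m₃ : ℂ) (h₁ : m₁ ≠ 0) (h₂ : m₂ ≠ 0) (h₃ : m₃ ≠ 0)
    (h₁₂ : m₁ + m₂ ≠ 0) (h₁₃ : m₁ + m₃ ≠ 0) (h₂₃ : m₂ + m₃ ≠ 0)
    (h₁₂₃ : m₁ + m₂ + m₃ ≠ 0) :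
    ∀ j : ℕ, 1 ≤ j →
      (C m₁ * X 0 ^ j + C m₂ * X 1 ^ j + C m₃ * X 2 ^ j : MvPolynomial (Fin 3) ℂ) ∈
        Algebra.adjoin ℂ
          ((fun i : ℕ =>
              (C m₁ * X 0 ^ i + C m₂ * X 1 ^ i + C m₃ * X 2 ^ i : MvPolynomial (Fin 3) ℂ)) ''
            Set.Icc 1 7) := by
  have hp (i : ℕ) : (C m₁ * X 0 ^ i + C m₂ * X 1 ^ i + C m₃ * X 2 ^ i : MvPolynomial (Fin 3) ℂ) =
      weightedPowerSum ![m₁, m₂, m₃] X i := by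
    simp only [weightedPowerSum, Fin.sum_univ_three, Matrix.cons_val, smul_eq_C_mul]
  simp only [hp]
  exact fun j _ ↦ stmt_14_general h₁.isUnit h₂.isUnit h₃.isUnit h₁₂.isUnit h₁₃.isUnit h₂₃.isUnit
    h₁₂₃.isUnit X j
end
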